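/- Let f : ℝ^n → ℝ be convex and continuously differentiable with L-Lipschitz continuous gradient (L > 0), let x* be a minimizer of f with f* = f(x*), and fix α₀ ∈ (0, 1/L]. Let {x_k} be generated by the Heavy-ball iteration with time-varying step-sizes x_{k+1} = x_k - α_k ∇f(x_k) + β_k (x_k - x_{k-1}) where β_k = k/(k+2) and α_k = α₀/(k+2), initialized at x_{-1} = x_0. Then for all T ∈ ℕ, f(x_T) - f* ≤ ‖x_0 - x*‖² / (2α₀(T+1)). -/

import Mathlib

/-!
With `z k = x k + k • (x k - x (k - 1))`, the heavy-ball recursion becomes the gradient-like step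
`z (k + 1) = z k - a₀ • f' (x k)`. Expanding `‖z (k + 1) - xstar‖ ^ 2` produces
`⟪f' (x k), x k - xstar⟫` and `k * ⟪f' (x k), x k - x (k - 1)⟫`. The second is bounded below by
the gradient inequality `gradient_inequality`, the first by its strengthening at a minimizer
`gradient_inequality_minimizer`, whose extra term `‖f' (x k)‖ ^ 2 / (2 * L)` absorbs
`a₀ ^ 2 * ‖f' (x k)‖ ^ 2` because `a₀ ≤ 1 / L`. Hence the energy
`‖z k - xstar‖ ^ 2 + 2 * a₀ * k * (f (x (k - 1)) - f xstar)` does not increase with `k`; comparing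
its values at `T + 1` and at `0` gives the rate.
-/

open scoped RealInnerProductSpace

section

variable {E : Type*} [NormedAddCommGroup E] [InnerProductSpace ℝ E] [CompleteSpace E]

lemma hasDerivAt_comp_line {f : E → ℝ} {f' : E → E} (hgrad : ∀ z, HasGradientAt f (f' z) z)
    (z d : E) (t : ℝ) : HasDerivAt (fun s : ℝ => f (z + s • d)) ⟪f' (z + t • d), d⟫ t := by
  have h1 : HasDerivAt (fun s : ℝ => z + s • d) d t := by
    simpa using ((hasDerivAt_id t).smul_const d).const_add z
  have h2 := (hgrad (z + t • d)).hasFDerivAt.comp_hasDerivAt t h1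
  rw [InnerProductSpace.toDual_apply_apply] at h2
  exact h2

lemma gradient_inequality {f : E → ℝ} {f' : E → E} (hgrad : ∀ z, HasGradientAt f (f' z) z)
    (hconv : ConvexOn ℝ Set.univ f) (z y : E) : f z + ⟪f' z, y - z⟫ ≤ f y := by
  have hc : ConvexOn ℝ Set.univ (fun s : ℝ => f (z + s • (y - z))) := by
    have h := hconv.comp_affineMap (AffineMap.lineMap z y : ℝ →ᵃ[ℝ] E)
    have he : f ∘ (AffineMap.lineMap z y : ℝ →ᵃ[ℝ] E) = fun s : ℝ => f (z + s • (y - z)) := by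
      funext s
      simp [AffineMap.lineMap_apply, add_comm]
    rw [he] at h
    simpa using h
  have h := hc.le_slope_of_hasDerivAt (Set.mem_univ 0) (Set.mem_univ 1) zero_lt_one
    (hasDerivAt_comp_line hgrad z (y - z) 0)
  simp [slope_def_field] at h
  linarith

/-- The descent lemma: a function with `L`-Lipschitz gradient lies below its quadratic upper
model. -/
lemma descent_lemma {f : E → ℝ} {f' : E → E} (hgrad : ∀ z, HasGradientAt f (f' z) z) {L : ℝ}
    (hlip : ∀ z w, ‖f' z - f' w‖ ≤ L * ‖z - w‖) (z d : E) :
    f (z + d) ≤ f z + ⟪f' z, d⟫ + L / 2 * ‖d‖ ^ 2 := by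
  -- The gap between `f` and its model along the segment has nonpositive derivative.
  have hd (t : ℝ) : HasDerivAt
      (fun s : ℝ => f (z + s • d) - s * ⟪f' z, d⟫ - s ^ 2 * (L / 2 * ‖d‖ ^ 2))
      (⟪f' (z + t • d), d⟫ - ⟪f' z, d⟫ - 2 * t * (L / 2 * ‖d‖ ^ 2)) t := by
    have h1 := (hasDerivAt_id t).mul_const ⟪f' z, d⟫
    have h2 := (hasDerivAt_pow 2 t).mul_const (L / 2 * ‖d‖ ^ 2)
    refine (((hasDerivAt_comp_line hgrad z d t).sub h1).sub h2).congr_deriv ?_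
    simp
  have hanti := antitoneOn_of_deriv_nonpos (convex_Ici (0 : ℝ))
    (fun t _ => (hd t).continuousAt.continuousWithinAt)
    (fun t _ => (hd t).differentiableAt.differentiableWithinAt)
    (fun t ht => by
      rw [(hd t).deriv, ← inner_sub_left]
      have ht : 0 < t := by simpa using ht
      have h1 := real_inner_le_norm (f' (z + t • d) - f' z) d
      have h2 := hlip (z + t • d) z
      rw [add_sub_cancel_left, norm_smul, Real.norm_of_nonneg ht.le] at h2
      have h3 := mul_le_mul_of_nonneg_right h2 (norm_nonneg d)
      nlinarith)
  have h := hanti (Set.mem_Ici.2 le_rfl) (Set.mem_Ici.2 zero_le_one) zero_le_one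
  simp at h
  linarith

/-- The point `xstar + L⁻¹ • f' z` sees both the gradient inequality at `z` and the descent lemma
at `xstar`, and comparing the two yields the quadratic term. -/
lemma gradient_inequality_minimizer {f : E → ℝ} {f' : E → E}
    (hgrad : ∀ z, HasGradientAt f (f' z) z) (hconv : ConvexOn ℝ Set.univ f) {L : ℝ} (hL : 0 < L)
    (hlip : ∀ z w, ‖f' z - f' w‖ ≤ L * ‖z - w‖) {xstar : E} (hmin : ∀ z, f xstar ≤ f z) (z : E) :
    f z - f xstar + ‖f' z‖ ^ 2 / (2 * L) ≤ ⟪f' z, z - xstar⟫ := by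
  have h0 : f' xstar = 0 := by
    have h := IsLocalMin.hasFDerivAt_eq_zero (Filter.Eventually.of_forall hmin)
      (hgrad xstar).hasFDerivAt
    simpa using h
  have h1 := gradient_inequality hgrad hconv z (xstar + L⁻¹ • f' z)
  have h2 := descent_lemma hgrad hlip xstar (L⁻¹ • f' z)
  have e : xstar + L⁻¹ • f' z - z = L⁻¹ • f' z - (z - xstar) := by abel
  rw [e, inner_sub_right, real_inner_smul_right, real_inner_self_eq_norm_sq] at h1
  rw [h0, inner_zero_left, norm_smul, Real.norm_of_nonneg (by positivity), mul_pow] at h2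
  have e2 : L / 2 * (L⁻¹ ^ 2 * ‖f' z‖ ^ 2) = ‖f' z‖ ^ 2 / (2 * L) := by field_simp
  have e3 : L⁻¹ * ‖f' z‖ ^ 2 = 2 * (‖f' z‖ ^ 2 / (2 * L)) := by field_simp
  linarith

end

/-- Theorem 2: Heavy-ball with time-varying step-sizes β_k = k/(k+2),
α_k = α₀/(k+2): the iterates themselves converge at rate O(1/T). -/
theorem heavy_ball_time_varying_rate
    {n : ℕ} (f : EuclideanSpace ℝ (Fin n) → ℝ)
    (f' : EuclideanSpace ℝ (Fin n) → EuclideanSpace ℝ (Fin n))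
    (L : ℝ) (hL : 0 < L)
    (hconv : ConvexOn ℝ Set.univ f)
    (hC1 : ContDiff ℝ 1 f)
    (hgrad : ∀ z, HasGradientAt f (f' z) z)
    (hlip : ∀ z w, ‖f' z - f' w‖ ≤ L * ‖z - w‖)
    (xstar : EuclideanSpace ℝ (Fin n)) (hmin : ∀ z, f xstar ≤ f z)
    (a₀ : ℝ) (ha0 : 0 < a₀) (ha1 : a₀ ≤ 1 / L)
    (x : ℤ → EuclideanSpace ℝ (Fin n))
    (hinit : x (-1) = x 0)
    (hiter : ∀ k : ℤ, 0 ≤ k →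
      x (k + 1) = x k - (a₀ / ((k : ℝ) + 2)) • f' (x k) +
        ((k : ℝ) / ((k : ℝ) + 2)) • (x k - x (k - 1)))
    (T : ℕ) :
    f (x (T : ℤ)) - f xstar ≤ ‖x 0 - xstar‖ ^ 2 / (2 * a₀ * (T + 1)) := by
  set z : ℕ → EuclideanSpace ℝ (Fin n) :=
    fun k => x (k : ℤ) + (k : ℝ) • (x (k : ℤ) - x ((k : ℤ) - 1)) with hz
  have hstep (k : ℕ) : z (k + 1) = z k - a₀ • f' (x (k : ℤ)) := by
    have h := hiter k (Int.natCast_nonneg k)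
    have hk : ((k : ℝ) + 2) ≠ 0 := by positivity
    simp only [Int.cast_natCast] at h
    simp only [hz, Nat.cast_add, Nat.cast_one, add_sub_cancel_right]
    rw [h]
    match_scalars <;> field_simp <;> ring
  have henergy (k : ℕ) : ‖z k - xstar‖ ^ 2 + 2 * a₀ * k * (f (x ((k : ℤ) - 1)) - f xstar)
      ≤ ‖x 0 - xstar‖ ^ 2 := by
    induction k with
    | zero => simp [hz]
    | succ k ih =>
      refine le_trans ?_ ih
      have h1 := gradient_inequality_minimizer hgrad hconv hL hlip hmin (x (k : ℤ))
      have h2 := gradient_inequality hgrad hconv (x (k : ℤ)) (x ((k : ℤ) - 1))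
      rw [← neg_sub (x (k : ℤ)), inner_neg_right] at h2
      have e : z (k + 1) - xstar = (z k - xstar) - a₀ • f' (x (k : ℤ)) := by
        rw [hstep]; abel
      have e2 : ⟪z k - xstar, f' (x (k : ℤ))⟫ = ⟪f' (x (k : ℤ)), x (k : ℤ) - xstar⟫
          + k * ⟪f' (x (k : ℤ)), x (k : ℤ) - x ((k : ℤ) - 1)⟫ := by
        rw [real_inner_comm, ← real_inner_smul_right, ← inner_add_right]
        congr 1
        simp only [hz]; abel
      rw [e, norm_sub_sq_real, real_inner_smul_right, e2, norm_smul, Real.norm_of_nonneg ha0.le,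
        mul_pow]
      push_cast
      rw [add_sub_cancel_right]
      -- The step-size bound pays for the squared gradient norm.
      have h3 : a₀ ^ 2 * ‖f' (x (k : ℤ))‖ ^ 2
          ≤ 2 * a₀ * (‖f' (x (k : ℤ))‖ ^ 2 / (2 * L)) := by
        have := mul_le_mul_of_nonneg_left ha1
          (by positivity : 0 ≤ a₀ * ‖f' (x (k : ℤ))‖ ^ 2)
        calc _ = a₀ * ‖f' (x (k : ℤ))‖ ^ 2 * a₀ := by ring
          _ ≤ _ := this
          _ = _ := by field_simp
      have h4 := mul_le_mul_of_nonneg_left h1 (by positivity : 0 ≤ 2 * a₀)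
      have h5 := mul_le_mul_of_nonneg_left h2 (by positivity : 0 ≤ 2 * a₀ * (k : ℝ))
      linarith
  have h := henergy (T + 1)
  push_cast at h
  rw [add_sub_cancel_right] at h
  rw [le_div_iff₀ (by positivity)]
  nlinarith [sq_nonneg ‖z (T + 1) - xstar‖]
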